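/- Action of X_n^− on the Schur basis via vertical strips: for every partition μ, all m, n ∈ ℤ and i ∈ {0,1}, the following holds in W_i: X_n^− (s_μ e^{mα}e^{iα/2}) = (−1)^{n+1+i} ( ∑_{j≥0} q^{2j} · sgn((b_j, μ')) · ∑_λ s_λ ) e^{(m−1)α}e^{iα/2}, where b_j := 2m−n−1+i−j, μ' is the conjugate partition of μ, (b_j,μ') is the juxtaposed tuple, the inner sum is over all partitions λ such that π((b_j,μ')) is a partition and λ − π((b_j,μ'))' is a vertical j-strip (ρ' denoting the conjugate of ρ), and only finitely many values of j contribute nonzero terms. -/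

import Mathlib

/-!
Put `C = 2m − n − 1 + i`.  On `P·e^{mα}` the operator `X_n^−` acts by `∑_j H_{C+j} · h_j(∂) P`, where
`∑_k H_k t^k = exp (−∑ (1+q^{2n}) p_n tⁿ/n) = E(−t)·E(−q²t)`, that is,
`H_k = (−1)^k ∑_b q^{2b} e_b e_{k−b}` (`HZm_eq`).  Exchanging the two sums,
`X_n^− P = (−1)^C ∑_b q^{2b} e_b · ∑_j (−1)^j e_{C−b+j} h_j(∂) P`.

The inner sum is the dual Bernstein operator.  The generating function of the `h_j(∂)` is the algebra
homomorphism `Phi : p_n ↦ p_n + xⁿ` (`DopF_hhF`), which sends `e_k` to `e_k + x e_{k−1}`.  So on a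
determinant `det (e_{ν_i−i+j})` its coefficients are the maximal minors of a matrix with one extra
column (`coeff_det_bidiag`), and the inner sum is the expansion along the first row of the determinant
attached to the tuple `(C−b, ν)` (`bernstein_schurEF`).  This applies to `s_μ = det (e_{μ'_i−i+j})`,
by Jacobi's complementary minor theorem for the mutually inverse Toeplitz matrices of `h` and `±e`
(`schurF_eq_schurEF`).

It remains to expand `e_b · det (e_{T_i−i+j})` for `T = (C−b, μ')`.  Permuting rows replaces `T` by
`π(T)` up to the sign `sgn T`, with value zero if `T` is degenerate or `π(T)` has a negative entry.  By
duality again the determinant becomes `s_ρ` with `ρ = π(T)'`, and the vertical Pieri rule for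
`e_b s_ρ` (`pieri`) gives the sum over vertical strips (`sgnT_smul_strips`).  The Pieri rule follows from
`coeff_det_bidiag` as well: with `A_c` the columns of the Jacobi–Trudi matrix with one extra column,
`det (A_{c+1} + x A_c)` expands by rows into the `s_λ` and by columns into minors, and the relevant
minor is `e_b s_ρ` (`det_wideJT_minor`).
-/

open MvPolynomial

noncomputable section

/-- The base field `F = ℚ(q)`. -/
abbrev Fq : Type := RatFunc ℚ

/-- The indeterminate `q ∈ ℚ(q)`. -/
def qq : Fq := RatFunc.X

/-- `Λ_F = F[p₁,p₂,…]`, with the variable `X n` (for `n : ℕ+`) the power sum `p_n`. -/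
abbrev LamF : Type := MvPolynomial ℕ+ Fq

/-- The power sum `p_n`. -/
def ppF (n : ℕ+) : LamF := X n

/-- The family `g` with generating function `∑_k g_k t^k = exp (∑_{n≥1} c n · p_n tⁿ/n)`,
characterized by `g 0 = 1` and the recursion obtained by differentiating:
`(k+1) · g (k+1) = ∑_{i=0}^{k} c (i+1) · p_{i+1} · g (k−i)`. -/
def genFamF (c : ℕ → Fq) : ℕ → LamF
  | 0 => 1
  | (k+1) => (((k : Fq) + 1)⁻¹) •
      ∑ i ∈ Finset.range (k+1), c (i+1) • (ppF ⟨i+1, Nat.succ_pos i⟩ * genFamF c (k - i))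
  decreasing_by exact Nat.lt_succ_of_le (Nat.sub_le k i)

/-- The complete homogeneous symmetric function `h_k`. -/
def hhF : ℕ → LamF := genFamF fun _ => 1

/-- The elementary symmetric function `e_k`. -/
def eeF : ℕ → LamF := genFamF fun n => (-1)^(n+1)

/-- `h` indexed by `ℤ` (zero in negative degrees). -/
def hZF (n : ℤ) : LamF := if 0 ≤ n then hhF n.toNat else 0

/-- `e` indexed by `ℤ` (zero in negative degrees). -/
def eZF (n : ℤ) : LamF := if 0 ≤ n then eeF n.toNat else 0

/-- The creation coefficients of `X⁺(z)`:
`exp (∑ ((1+q^{2n})q^{−n}/n)·p_n·zⁿ) = ∑_k HpF k · z^k`. -/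
def HpF : ℕ → LamF := genFamF fun n => (1 + qq ^ (2*n)) * (qq⁻¹) ^ n

/-- `HpF` indexed by `ℤ`. -/
def HZp (n : ℤ) : LamF := if 0 ≤ n then HpF n.toNat else 0

/-- The annihilation avatars for `X⁺(z)`: since
`(1+q^{2n})q^{−n}/n · a_n = q^{−n}·∂/∂p_n`, the coefficient of `z^{−j}` in
`exp (−∑ ((1+q^{2n})q^{−n}/n)·a_n·z^{−n})` is `ApF j` with `p_i ↦ i·∂/∂p_i`
substituted, where `∑_k ApF k t^k = exp (−∑ q^{−n} p_n tⁿ/n)`. -/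
def ApF : ℕ → LamF := genFamF fun n => -((qq⁻¹) ^ n)

/-- The creation coefficients of `X⁻(z)`:
`exp (−∑ ((1+q^{2n})/n)·p_n·zⁿ) = ∑_k HmF k · z^k`. -/
def HmF : ℕ → LamF := genFamF fun n => -(1 + qq ^ (2*n))

/-- `HmF` indexed by `ℤ`. -/
def HZm (n : ℤ) : LamF := if 0 ≤ n then HmF n.toNat else 0

/-- The differential operator `∏_i (i·∂/∂p_i)^(α i)`. -/
def monOpF (α : ℕ+ →₀ ℕ) : Module.End Fq LamF :=
  ((α.support.sort (· ≤ ·)).map fun (i : ℕ+) =>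
    (((i : ℕ) : Fq) • (pderiv i).toLinearMap) ^ (α i)).prod

/-- `f(∂) P`: substitute `p_i ↦ i·∂/∂p_i` in `f` and apply to `P`. -/
def DopF (f : LamF) (P : LamF) : LamF := ∑ α ∈ f.support, f.coeff α • monOpF α P

/-- Bound for the weighted degree of `P` (weight of `p_i` is `i`). -/
def wboundF (P : LamF) : ℕ := P.support.sup fun α => α.sum fun i k => (i : ℕ) * k

/-- The level-one Fock space `W_i = Λ_F ⊗ F[ℤα]e^{iα/2}`, realized as `ℤ →₀ Λ_F`;
`Finsupp.single m P` represents `P·e^{mα}e^{iα/2}`. -/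
abbrev W : Type := ℤ →₀ LamF

/-- The Drinfeld current component `X_n^+` on `W_i` (the parameter `i ∈ {0,1}` enters
through `z^∂ e^{mα}e^{iα/2} = z^{2m+i} e^{mα}e^{iα/2}`): the coefficient of `z^{−n−1}` in
`X⁺(z) = exp(∑((1+q^{2n})q^{−n}/n)a_{−n}zⁿ)·exp(−∑((1+q^{2n})q^{−n}/n)a_n z^{−n})·e^α z^∂`,
i.e. `X_n^+(P·e^{mα}) = ∑_j HpF_{j−n−1−2m−i} · (ApF j)(∂) P · e^{(m+1)α}`
(only the finitely many `j ≤ wboundF P` contribute). -/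
def Xp (i n : ℤ) (w : W) : W :=
  w.sum fun m P => Finsupp.single (m+1)
    (∑ j ∈ Finset.range (wboundF P + 1),
      HZp ((j : ℤ) - n - 1 - 2*m - i) * DopF (ApF j) P)

/-- The Drinfeld current component `X_n^-` on `W_i`: the coefficient of `z^{−n−1}` in
`X⁻(z) = exp(−∑((1+q^{2n})/n)a_{−n}zⁿ)·exp(∑((1+q^{2n})/n)a_n z^{−n})·e^{−α} z^{−∂}`,
i.e. `X_n^-(P·e^{mα}) = ∑_j HmF_{j+2m+i−n−1} · h_j(∂) P · e^{(m−1)α}`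
(here `(1+q^{2n})/n · a_n = ∂/∂p_n`, whose generating family is `h`). -/
def Xm (i n : ℤ) (w : W) : W :=
  w.sum fun m P => Finsupp.single (m-1)
    (∑ j ∈ Finset.range (wboundF P + 1),
      HZm ((j : ℤ) + 2*m + i - n - 1) * DopF (hhF j) P)

/-- The `q`-factorial `[r]! = ∏_{k=1}^r (q^k − q^{−k})/(q − q^{−1})`. -/
def qfact (r : ℕ) : Fq := ∏ k ∈ Finset.range r, (qq ^ (k+1) - (qq⁻¹) ^ (k+1)) / (qq - qq⁻¹)

/-- The divided power `x^{(r)} = x^r / [r]!` of an operator on `W`. -/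
def divpow (f : W → W) (r : ℕ) (w : W) : W := (qfact r)⁻¹ • (f^[r] w)

/-- Schur function of an integer tuple: `s_ρ = det (h_{ρ_i − i + j})`. -/
def schurF {l : ℕ} (ρ : Fin l → ℤ) : LamF :=
  (Matrix.of fun i j : Fin l => hZF (ρ i - (i.1 : ℤ) + (j.1 : ℤ))).det

/-- Dual Schur function of an integer tuple: `s_{ρ'} = det (e_{ρ_i − i + j})`. -/
def schurEF {l : ℕ} (ρ : Fin l → ℤ) : LamF :=
  (Matrix.of fun i j : Fin l => eZF (ρ i - (i.1 : ℤ) + (j.1 : ℤ))).det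

/-- `q^{±∂}`: `q^{ε∂}(P·e^{mα}e^{iα/2}) = q^{ε(2m+i)}·P·e^{mα}e^{iα/2}`. -/
def qd (i ε : ℤ) (w : W) : W := w.sum fun m P => Finsupp.single m (qq ^ (ε * (2*m + i)) • P)

/-- The Chevalley generator `e₁ = X₀⁺`. -/
def che1 (i : ℤ) : W → W := Xp i 0
/-- The Chevalley generator `f₁ = X₀⁻`. -/
def chf1 (i : ℤ) : W → W := Xm i 0
/-- The Chevalley generator `e₀ = X₁⁻ ∘ q^{−∂}`. -/
def che0 (i : ℤ) (w : W) : W := Xm i 1 (qd i (-1) w)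
/-- The Chevalley generator `f₀ = q^∂ ∘ X₋₁⁺`. -/
def chf0 (i : ℤ) (w : W) : W := qd i 1 (Xp i (-1) w)


/-- `δ = (r−1, r−2, …, 1, 0)` as a function `Fin r → ℤ`. -/
def deltaT (r : ℕ) (i : Fin r) : ℤ := (r : ℤ) - 1 - (i.1 : ℤ)

/-- `σ` sorts the tuple `ν + δ` into strictly decreasing order. -/
def Sorts {r : ℕ} (ν : Fin r → ℤ) (σ : Equiv.Perm (Fin r)) : Prop :=
  StrictAnti fun i => ν (σ i) + deltaT r (σ i)

-- `sgn(ν)`: `0` if `ν` is degenerate (`ν+δ` has a repeated entry, so no sorting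
-- permutation exists), and otherwise `(−1)^{ℓ(σ)} = sign σ` for the unique `σ` with
-- `σ(ν+δ)` strictly decreasing.
open Classical in
def sgnT {r : ℕ} (ν : Fin r → ℤ) : ℤ :=
  if h : ∃ σ, Sorts ν σ then (Equiv.Perm.sign h.choose : ℤ) else 0

-- `π(ν) := σ(ν+δ) − δ` for the sorting permutation `σ` (junk value `0` if `ν` is
-- degenerate).
open Classical in
def piT {r : ℕ} (ν : Fin r → ℤ) : Fin r → ℤ :=
  if h : ∃ σ, Sorts ν σ then
    (fun i => ν (h.choose i) + deltaT r (h.choose i) - deltaT r i) else 0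

/-- `π` is a partition: weakly decreasing with nonnegative entries. -/
def IsPartitionT {r : ℕ} (π : Fin r → ℤ) : Prop := Antitone π ∧ ∀ i, 0 ≤ π i

/-- The entry in row `t` (0-indexed) of a tuple, padded by `0`. -/
def padZ {r : ℕ} (π : Fin r → ℤ) (t : ℕ) : ℤ := if h : t < r then π ⟨t, h⟩ else 0

/-- The number of entries of `π` that are `≥ c+1`, i.e. the (0-indexed) `c`-th entry of
the conjugate partition `π'`. -/
def conjT {r : ℕ} (π : Fin r → ℤ) (c : ℕ) : ℤ :=
  ((Finset.univ.filter fun i : Fin r => (c : ℤ) + 1 ≤ π i).card : ℤ)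

/-! ### Generating families -/

theorem genFamF_zero (c : ℕ → Fq) : genFamF c 0 = 1 := by
  rw [genFamF]

theorem genFamF_succ (c : ℕ → Fq) (k : ℕ) :
    ((k : Fq) + 1) • genFamF c (k + 1) =
      ∑ i ∈ Finset.range (k+1),
        c (i+1) • (ppF (Nat.succPNat i) * genFamF c (k - i)) := by
  rw [genFamF, smul_smul, mul_inv_cancel₀ (by exact_mod_cast Nat.succ_ne_zero k), one_smul]
  rfl

/-- The recursion determines the family. -/
theorem genFamF_unique (c : ℕ → Fq) (f : ℕ → LamF) (h0 : f 0 = 1)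
    (hs : ∀ k : ℕ, ((k : Fq) + 1) • f (k + 1) =
      ∑ i ∈ Finset.range (k+1), c (i+1) • (ppF (Nat.succPNat i) * f (k - i))) (k : ℕ) :
    genFamF c k = f k := by
  induction k using Nat.strong_induction_on with
  | _ k ih =>
    rcases k with _ | k
    · rw [genFamF_zero, h0]
    · have hk : ((k : Fq) + 1) ≠ 0 := by exact_mod_cast Nat.succ_ne_zero k
      apply smul_right_injective LamF hk
      change ((k : Fq) + 1) • _ = ((k : Fq) + 1) • _
      rw [genFamF_succ, hs]
      refine Finset.sum_congr rfl fun i _ => ?_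
      rw [ih (k - i) (by omega)]

/-- Coefficient form of `exp(f)·exp(g) = exp(f + g)`. -/
theorem genFamF_add (c d : ℕ → Fq) (k : ℕ) :
    genFamF (fun n => c n + d n) k =
      ∑ x ∈ Finset.HasAntidiagonal.antidiagonal k, genFamF c x.1 * genFamF d x.2 := by
  let S : (ℕ → Fq) → PowerSeries LamF := fun c =>
    PowerSeries.mk fun i => c (i+1) • ppF (Nat.succPNat i)
  let G : (ℕ → Fq) → PowerSeries LamF := fun c => PowerSeries.mk (genFamF c)
  have hG : ∀ c, PowerSeries.derivative LamF (G c) = S c * G c := by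
    intro c
    ext1 n
    rw [PowerSeries.coeff_derivative, PowerSeries.coeff_mul,
      Finset.Nat.sum_antidiagonal_eq_sum_range_succ_mk]
    simp only [G, S, PowerSeries.coeff_mk]
    have := genFamF_succ c n
    rw [mul_comm]
    simp only [smul_mul_assoc]
    rw [← this, Algebra.smul_def]
    simp
  have hGG : PowerSeries.derivative LamF (G c * G d) =
      S (fun n => c n + d n) * (G c * G d) := by
    have hS : S (fun n => c n + d n) = S c + S d := by
      ext1 n; simp [S, add_smul]
    rw [Derivation.leibniz, hG, hG, hS, smul_eq_mul, smul_eq_mul]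
    ring
  have hco : ∀ k, PowerSeries.coeff k (G c * G d) =
      ∑ x ∈ Finset.HasAntidiagonal.antidiagonal k, genFamF c x.1 * genFamF d x.2 := by
    intro k
    rw [PowerSeries.coeff_mul]
    simp [G]
  refine genFamF_unique _
    (fun k => ∑ x ∈ Finset.HasAntidiagonal.antidiagonal k, genFamF c x.1 * genFamF d x.2)
    (by simp [genFamF_zero]) (fun k => ?_) k
  have := congrArg (PowerSeries.coeff k) hGG
  rw [PowerSeries.coeff_derivative, hco, PowerSeries.coeff_mul,
      Finset.Nat.sum_antidiagonal_eq_sum_range_succ_mk _ k] at this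
  simp only [hco] at this
  rw [Algebra.smul_def, mul_comm]
  simp only [S, PowerSeries.coeff_mk, smul_mul_assoc] at this
  rw [← this]
  simp

/-- Rescaling `t` by `r`. -/
theorem genFamF_scale (r : Fq) (c : ℕ → Fq) (k : ℕ) :
    genFamF (fun n => r ^ n * c n) k = r ^ k • genFamF c k := by
  refine genFamF_unique _ (fun k => r ^ k • genFamF c k) (by simp [genFamF_zero])
    (fun k => ?_) k
  rw [smul_comm, genFamF_succ, Finset.smul_sum]
  refine Finset.sum_congr rfl fun i hi => ?_
  rw [Finset.mem_range] at hi
  rw [mul_smul_comm, smul_smul, smul_smul]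
  congr 1
  obtain ⟨d, rfl⟩ : ∃ d, k = i + d := ⟨k - i, by omega⟩
  rw [Nat.add_sub_cancel_left]
  ring

theorem genFamF_zero_fun (k : ℕ) : genFamF (fun _ => 0) k = if k = 0 then 1 else 0 := by
  refine genFamF_unique _ (fun k => if k = 0 then 1 else 0) (by simp) (fun k => ?_) k
  simp

/-- `exp (−∑ p_n tⁿ/n) = E(−t)`. -/
theorem genFamF_neg_one (k : ℕ) : genFamF (fun _ => -1) k = (-1 : Fq) ^ k • eeF k := by
  rw [eeF, ← genFamF_scale]
  congr 1
  funext n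
  rw [← pow_add, ← add_assoc, ← two_mul, pow_succ, pow_mul]
  simp

/-- `exp (−∑ (1+q^{2n}) p_n tⁿ/n) = E(−q²t)·E(−t)`, coefficientwise. -/
theorem HmF_eq (k : ℕ) :
    HmF k = (-1 : Fq) ^ k • ∑ b ∈ Finset.range (k + 1), qq ^ (2 * b) • (eeF b * eeF (k - b)) := by
  have h1 : HmF k = genFamF (fun n => (qq ^ 2) ^ n * (-1) + (-1)) k := by
    rw [HmF]; congr 1; funext n; rw [← pow_mul]; ring
  rw [h1, genFamF_add, Finset.Nat.sum_antidiagonal_eq_sum_range_succ_mk, Finset.smul_sum]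
  refine Finset.sum_congr rfl fun b hb => ?_
  rw [Finset.mem_range] at hb
  obtain ⟨d, rfl⟩ : ∃ d, k = b + d := ⟨k - b, by omega⟩
  simp only [Nat.add_sub_cancel_left]
  rw [genFamF_scale, genFamF_neg_one, genFamF_neg_one]
  simp only [smul_mul_assoc, mul_smul_comm, smul_smul]
  congr 1
  ring

/-- `E(−t)·H(t) = 1`. -/
theorem sum_ee_hh (k : ℕ) :
    ∑ a ∈ Finset.range (k + 1), (-1 : Fq) ^ a • (eeF a * hhF (k - a)) =
      if k = 0 then 1 else 0 := by
  rw [← genFamF_zero_fun]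
  have h1 : (fun _ : ℕ => (0 : Fq)) = fun n => (fun _ => (-1 : Fq)) n + (fun _ => (1 : Fq)) n := by
    funext n; simp
  rw [h1, genFamF_add, Finset.Nat.sum_antidiagonal_eq_sum_range_succ_mk]
  refine Finset.sum_congr rfl fun a _ => ?_
  rw [genFamF_neg_one, smul_mul_assoc]
  rfl

theorem hZF_natCast (n : ℕ) : hZF n = hhF n := by simp [hZF]
theorem eZF_natCast (n : ℕ) : eZF n = eeF n := by simp [eZF]
theorem hZF_neg {n : ℤ} (h : n < 0) : hZF n = 0 := by simp [hZF, h]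
theorem eZF_neg {n : ℤ} (h : n < 0) : eZF n = 0 := by simp [eZF, h]
theorem hhF_zero : hhF 0 = 1 := genFamF_zero _
theorem eeF_zero : eeF 0 = 1 := genFamF_zero _

/-- `HZm_k = (−1)^k ∑_b q^{2b} e_b e_{k−b}`, with any sufficiently long range of summation. -/
theorem HZm_eq (k : ℤ) (M : ℕ) (hM : k < M) :
    HZm k = (-1 : Fq) ^ k • ∑ b ∈ Finset.range M, qq ^ (2 * b) • (eeF b * eZF (k - b)) := by
  rcases lt_or_ge k 0 with hk | hk
  · rw [HZm, if_neg (by omega), Finset.sum_eq_zero, smul_zero]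
    intro b _
    rw [eZF_neg (by omega), mul_zero, smul_zero]
  · obtain ⟨n, rfl⟩ := Int.eq_ofNat_of_zero_le hk
    rw [HZm, if_pos hk, Int.toNat_natCast, HmF_eq, zpow_natCast]
    congr 1
    symm
    rw [← Finset.sum_subset (s₁ := Finset.range (n+1))]
    · refine Finset.sum_congr rfl fun b hb => ?_
      rw [Finset.mem_range] at hb
      rw [← Nat.cast_sub (by omega), eZF_natCast]
    · intro b hb
      simp only [Finset.mem_range] at *
      omega
    · intro b _ hb
      simp only [Finset.mem_range] at *
      rw [eZF_neg (by omega), mul_zero, smul_zero]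

/-! ### The operators `h_j(∂)` and the translation `p_n ↦ p_n + tⁿ` -/

/-- The operator `i·∂/∂p_i`. -/
def pOp (i : ℕ+) : Module.End Fq LamF := ((i : ℕ) : Fq) • (pderiv i).toLinearMap

theorem pderiv_comm' (i j : ℕ+) (P : LamF) : pderiv i (pderiv j P) = pderiv j (pderiv i P) := by
  have h : ⁅(pderiv i : Derivation Fq LamF LamF), (pderiv j : Derivation Fq LamF LamF)⁆ = 0 := by
    apply MvPolynomial.derivation_ext
    intro k
    rw [Derivation.commutator_apply]
    classical
    rw [pderiv_X, pderiv_X]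
    by_cases h1 : i = k <;> by_cases h2 : j = k <;> simp [h1, h2]
  have := congrArg (fun D : Derivation Fq LamF LamF => D P) h
  simp only [Derivation.commutator_apply, Derivation.coe_zero, Pi.zero_apply] at this
  exact sub_eq_zero.mp this

theorem pOp_comm (i j : ℕ+) : pOp i * pOp j = pOp j * pOp i := by
  refine LinearMap.ext fun P => ?_
  simp only [pOp, Module.End.mul_apply, LinearMap.smul_apply, map_smul]
  rw [smul_comm]
  congr 2
  exact pderiv_comm' i j P

theorem pOp_comm_range : ∀ a ∈ Set.range pOp, ∀ b ∈ Set.range pOp, a * b = b * a := by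
  rintro _ ⟨i, rfl⟩ _ ⟨j, rfl⟩
  exact pOp_comm i j

section OpAlg

open scoped IsMulCommutative

/-- The commutative algebra of constant-coefficient differential operators, generated by the
`i·∂/∂p_i`. -/
abbrev OpAlg : Type := Algebra.adjoin Fq (Set.range pOp)

instance : IsMulCommutative (Algebra.adjoin Fq (Set.range pOp)) :=
  Algebra.isMulCommutative_adjoin Fq pOp_comm_range

/-- `i·∂/∂p_i` as an element of the commutative algebra `OpAlg`. -/
def pOpA (i : ℕ+) : OpAlg := ⟨pOp i, Algebra.subset_adjoin ⟨i, rfl⟩⟩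

/-- `f(∂)` as an element of `OpAlg`. -/
def DopA (f : LamF) : OpAlg := aeval pOpA f

theorem monOpF_eq (α : ℕ+ →₀ ℕ) :
    monOpF α = ((α.prod fun i k => pOpA i ^ k : OpAlg) : Module.End Fq LamF) := by
  have h : (α.prod fun i k => pOpA i ^ k : OpAlg) =
      ((α.support.sort (· ≤ ·)).map fun (i : ℕ+) => pOpA i ^ (α i)).prod := by
    rw [Finsupp.prod, ← List.prod_toFinset _ (Finset.sort_nodup _ _), Finset.sort_toFinset]
  rw [h, monOpF]
  change _ = (Algebra.adjoin Fq (Set.range pOp)).val _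
  rw [map_list_prod, List.map_map]
  rfl

/-- The multiplicativity of `f ↦ f(∂)`, which is not visible from the definition of `DopF`, comes
from this identification with an evaluation homomorphism. -/
theorem DopF_eq (f P : LamF) : DopF f P = (DopA f : Module.End Fq LamF) P := by
  rw [DopF, DopA, aeval_def, eval₂_eq]
  have : ((∑ d ∈ f.support, (algebraMap Fq OpAlg) (coeff d f) * ∏ i ∈ d.support, pOpA i ^ d i
      : OpAlg) : Module.End Fq LamF) = ∑ d ∈ f.support, coeff d f • monOpF d := by
    rw [AddSubmonoidClass.coe_finsetSum]
    refine Finset.sum_congr rfl fun d _ => ?_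
    rw [monOpF_eq, ← Algebra.smul_def]
    rfl
  rw [this]
  simp

theorem DopF_pp_mul (i : ℕ+) (f P : LamF) :
    DopF (ppF i * f) P = ((i : ℕ) : Fq) • pderiv i (DopF f P) := by
  rw [DopF_eq, DopF_eq, DopA, DopA, map_mul, ppF, aeval_X]
  rfl

theorem DopF_smul (a : Fq) (f P : LamF) : DopF (a • f) P = a • DopF f P := by
  rw [DopF_eq, DopF_eq, DopA, DopA, map_smul]
  rfl

theorem DopF_sum {ι : Type*} (s : Finset ι) (f : ι → LamF) (P : LamF) :
    DopF (∑ x ∈ s, f x) P = ∑ x ∈ s, DopF (f x) P := by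
  simp only [DopF_eq, DopA, map_sum]
  rw [AddSubmonoidClass.coe_finsetSum, LinearMap.sum_apply]

theorem DopF_one (P : LamF) : DopF 1 P = P := by
  rw [DopF_eq, DopA, map_one]
  rfl

theorem DopF_hhF_succ (k : ℕ) (P : LamF) :
    ((k : Fq) + 1) • DopF (hhF (k + 1)) P =
      ∑ i ∈ Finset.range (k+1),
        ((i : Fq) + 1) • pderiv (Nat.succPNat i) (DopF (hhF (k - i)) P) := by
  rw [← DopF_smul, hhF, genFamF_succ, DopF_sum]
  refine Finset.sum_congr rfl fun i _ => ?_
  rw [one_smul, DopF_pp_mul]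
  simp

end OpAlg

/-- The translation `p_n ↦ p_n + tⁿ`, the algebra homomorphism `exp (∑ tⁿ ∂/∂p_n)`. -/
def Phi : LamF →ₐ[Fq] Polynomial LamF :=
  aeval fun n : ℕ+ => Polynomial.C (X n) + Polynomial.X ^ (n : ℕ)

theorem Phi_X (n : ℕ+) : Phi (X n) = Polynomial.C (X n) + Polynomial.X ^ (n : ℕ) := by
  rw [Phi, aeval_X]

theorem Phi_C (a : Fq) : Phi (C a) = Polynomial.C (C a) := by
  rw [Phi, aeval_C]
  rfl

theorem coeff_Phi_mul_X (P : LamF) (n : ℕ+) (k : ℕ) :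
    (Phi (P * X n)).coeff k =
      (Phi P).coeff k * X n + if (n : ℕ) ≤ k then (Phi P).coeff (k - n) else 0 := by
  rw [map_mul, Phi_X, mul_add, Polynomial.coeff_add, Polynomial.coeff_mul_C,
    Polynomial.coeff_mul_X_pow']

/-- The recursion satisfied by `h_k(∂)`, for the coefficients of `Phi P`: the `t`-derivative of
`P(p_n + tⁿ)` is `∑ n tⁿ⁻¹ (∂P/∂p_n)(p_n + tⁿ)`. -/
theorem coeff_Phi_succ (P : LamF) (k : ℕ) :
    ((k : Fq) + 1) • (Phi P).coeff (k + 1) =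
      ∑ i ∈ Finset.range (k+1),
        ((i : Fq) + 1) • pderiv (Nat.succPNat i) ((Phi P).coeff (k - i)) := by
  induction P using MvPolynomial.induction_on generalizing k with
  | C a =>
    rw [Phi_C, Polynomial.coeff_C, if_neg (Nat.succ_ne_zero k), smul_zero, Finset.sum_eq_zero]
    intro i _
    rw [Polynomial.coeff_C]
    split_ifs <;> simp
  | add p q hp hq =>
    simp only [map_add, Polynomial.coeff_add, smul_add, hp, hq, Finset.sum_add_distrib]
  | mul_X P n ih =>
    simp only [coeff_Phi_mul_X]
    have h1 : ∀ i ∈ Finset.range (k + 1), ((i : Fq) + 1) • pderiv (Nat.succPNat i)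
        ((Phi P).coeff (k - i) * X n + if (n : ℕ) ≤ k - i then (Phi P).coeff (k - i - n) else 0) =
        (((i : Fq) + 1) • pderiv (Nat.succPNat i) ((Phi P).coeff (k - i))) * X n
        + ((if (n : ℕ) = i + 1 then ((i : Fq) + 1) • (Phi P).coeff (k - i) else 0) +
          (if (n : ℕ) ≤ k - i then ((i : Fq) + 1) • pderiv (Nat.succPNat i)
            ((Phi P).coeff (k - i - n)) else 0)) := by
      intro i _
      have h2 : pderiv (Nat.succPNat i) (X n : LamF) =
          if (n : ℕ) = i + 1 then 1 else 0 := by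
        split_ifs with h
        · have : n = Nat.succPNat i := PNat.eq h
          rw [← this, pderiv_X_self]
        · apply pderiv_X_of_ne
          intro h'
          apply h
          rw [h']
          rfl
      rw [map_add, pderiv_mul, h2, smul_add, smul_add, add_assoc]
      congr 1
      · rw [smul_mul_assoc]
      · congr 1
        · split_ifs <;> simp
        · split_ifs <;> simp
    rw [Finset.sum_congr rfl h1, Finset.sum_add_distrib, ← Finset.sum_mul, ← ih, smul_add,
      smul_mul_assoc, Finset.sum_add_distrib]
    congr 1
    obtain ⟨a, ha⟩ : ∃ a, (n : ℕ) = a + 1 := ⟨n - 1, by have := n.pos; omega⟩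
    rw [ha]
    by_cases hk : a ≤ k
    · obtain ⟨d, rfl⟩ : ∃ d, k = a + d := ⟨k - a, by omega⟩
      rw [if_pos (by omega), Finset.sum_eq_single a, if_pos rfl]
      · have h3 : ∑ i ∈ Finset.range (a + d + 1), (if a + 1 ≤ a + d - i then ((i : Fq) + 1) •
            pderiv (Nat.succPNat i) ((Phi P).coeff (a + d - i - (a + 1))) else 0) =
            (d : Fq) • (Phi P).coeff d := by
          rw [← Finset.sum_filter]
          rcases d with _ | d
          · rw [Finset.filter_false_of_mem (by intro i _; omega)]
            simp
          · have : (Finset.range (a + (d+1) + 1)).filter (fun i => a + 1 ≤ a + (d + 1) - i) =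
                Finset.range (d + 1) := by
              ext i; simp only [Finset.mem_filter, Finset.mem_range]; omega
            rw [this]
            push_cast
            rw [ih]
            refine Finset.sum_congr rfl fun i hi => ?_
            rw [show a + (d + 1) - i - (a + 1) = d - i by omega]
        rw [h3, show a + d + 1 - (a + 1) = d by omega, show a + d - a = d by omega, ← add_smul]
        congr 1
        push_cast
        ring
      · intro b _ hb
        rw [if_neg (by omega)]
      · intro h
        exact absurd (Finset.mem_range.2 (by omega)) h
    · rw [if_neg (by omega), Finset.sum_eq_zero, Finset.sum_eq_zero]
      · simp
      · intro i hi
        rw [if_neg (by omega)]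
      · intro i hi
        rw [Finset.mem_range] at hi
        rw [if_neg (by omega)]

theorem coeff_Phi_zero (P : LamF) : (Phi P).coeff 0 = P := by
  induction P using MvPolynomial.induction_on with
  | C a => rw [Phi_C]; simp
  | add p q hp hq => rw [map_add, Polynomial.coeff_add, hp, hq]
  | mul_X P n ih => rw [coeff_Phi_mul_X, ih, if_neg (by have := n.pos; omega), add_zero]

/-- `h_k(∂)` is the coefficient of `t^k` in the translation `p_n ↦ p_n + tⁿ`. -/
theorem DopF_hhF (k : ℕ) (P : LamF) : DopF (hhF k) P = (Phi P).coeff k := by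
  induction k using Nat.strong_induction_on with
  | _ k ih =>
    rcases k with _ | k
    · rw [hhF_zero, DopF_one, coeff_Phi_zero]
    · have hk : ((k : Fq) + 1) ≠ 0 := by exact_mod_cast Nat.succ_ne_zero k
      apply smul_right_injective LamF hk
      change ((k : Fq) + 1) • _ = ((k : Fq) + 1) • _
      rw [DopF_hhF_succ, coeff_Phi_succ]
      refine Finset.sum_congr rfl fun i _ => ?_
      rw [ih (k - i) (by omega)]

theorem natDegree_Phi_le (P : LamF) : (Phi P).natDegree ≤ wboundF P := by
  rw [Phi, aeval_def, eval₂_eq]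
  refine Polynomial.natDegree_sum_le_of_forall_le _ _ fun d hd => ?_
  have h1 : (d.sum fun i k => (i : ℕ) * k) ≤ wboundF P :=
    Finset.le_sup (f := fun α : ℕ+ →₀ ℕ => α.sum fun i k => (i : ℕ) * k) hd
  refine le_trans ?_ h1
  refine (Polynomial.natDegree_C_mul_le (C (coeff d P)) _).trans ?_
  refine (Polynomial.natDegree_prod_le _ _).trans ?_
  refine Finset.sum_le_sum fun i _ => ?_
  refine Polynomial.natDegree_pow_le.trans ?_
  rw [mul_comm]
  refine Nat.mul_le_mul_right _ ?_
  compute_degree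

/-- `e_n + t·e_{n−1}`, with the convention `e_{−1} = 0`. -/
def eShift (n : ℤ) : Polynomial LamF :=
  Polynomial.C (eZF n) + Polynomial.X * Polynomial.C (eZF (n - 1))

/-- Since `eShift` is the effect of multiplying `E(t)` by `1 + xt`, dividing by `1 + xt` gives back
`E(t)`. -/
theorem eShift_telescope (n : ℕ) :
    ∑ i ∈ Finset.range (n+1), (-1 : Polynomial LamF) ^ i * Polynomial.X ^ (i+1) *
      eShift ((n - i : ℕ) : ℤ) = Polynomial.X * Polynomial.C (eeF n) := by
  induction n with
  | zero => simp [eShift, eeF_zero, eZF]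
  | succ n ih =>
    rw [Finset.sum_range_succ']
    have : ∀ i ∈ Finset.range (n+1), (-1 : Polynomial LamF) ^ (i+1) * Polynomial.X ^ (i+1+1) *
      eShift ((n + 1 - (i + 1) : ℕ) : ℤ) = (-Polynomial.X) * ((-1 : Polynomial LamF) ^ i *
        Polynomial.X ^ (i+1) * eShift ((n - i : ℕ) : ℤ)) := by
      intro i _
      rw [show n + 1 - (i + 1) = n - i by omega]
      ring
    rw [Finset.sum_congr rfl this, ← Finset.mul_sum, ih, Nat.sub_zero, eShift,
      show ((n + 1 : ℕ) : ℤ) - 1 = (n : ℕ) by push_cast; ring, eZF_natCast, eZF_natCast]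
    ring

theorem eeF_succ (k : ℕ) : ((k : LamF) + 1) * eeF (k + 1) =
    ∑ i ∈ Finset.range (k+1), (-1) ^ i * (ppF (Nat.succPNat i) * eeF (k - i)) := by
  have h := genFamF_succ (fun n => (-1)^(n+1)) k
  rw [Algebra.smul_def] at h
  rw [eeF]
  simp only [map_add, map_natCast, map_one] at h
  rw [h]
  refine Finset.sum_congr rfl fun i _ => ?_
  rw [Algebra.smul_def, pow_succ, pow_succ]
  simp

/-- Under `p_n ↦ p_n + xⁿ` the series `E(t)` is multiplied by `1 + xt`. -/
theorem Phi_eeF (n : ℕ) : Phi (eeF n) = eShift n := by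
  induction n using Nat.strong_induction_on with
  | _ n ih =>
    rcases n with _ | k
    · simp [eeF_zero, eShift, eZF]
    · have hk : ((k : Polynomial LamF) + 1) ≠ 0 := by exact_mod_cast Nat.succ_ne_zero k
      apply mul_left_cancel₀ hk
      have h1 := congrArg Phi (eeF_succ k)
      simp only [map_mul, map_add, map_natCast, map_one, map_sum, map_pow, map_neg] at h1
      rw [h1]
      have h2 : ∀ i ∈ Finset.range (k+1), (-1 : Polynomial LamF) ^ i *
          (Phi (ppF (Nat.succPNat i)) * Phi (eeF (k - i))) =
          Polynomial.C ((-1) ^ i * (ppF (Nat.succPNat i) * eeF (k - i))) +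
          Polynomial.X * Polynomial.C
            ((-1) ^ i * (ppF (Nat.succPNat i) * eZF (((k - i : ℕ) : ℤ) - 1))) +
          (-1 : Polynomial LamF) ^ i * Polynomial.X ^ (i+1) * eShift ((k - i : ℕ) : ℤ) := by
        intro i _
        rw [ih (k - i) (by omega), ppF, Phi_X, eShift, eZF_natCast]
        simp only [map_mul, map_pow, map_neg, map_one, Nat.succPNat_coe, Nat.succ_eq_add_one]
        ring
      rw [Finset.sum_congr rfl h2, Finset.sum_add_distrib, Finset.sum_add_distrib,
        eShift_telescope, ← Finset.mul_sum, ← map_sum, ← map_sum, ← eeF_succ]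
      have h3 : ∑ i ∈ Finset.range (k+1), (-1) ^ i *
          (ppF (Nat.succPNat i) * eZF (((k - i : ℕ) : ℤ) - 1)) = (k : LamF) * eeF k := by
        rw [Finset.sum_range_succ, eZF_neg (by omega), mul_zero, mul_zero, add_zero]
        rcases k with _ | k
        · simp
        · push_cast
          rw [eeF_succ]
          refine Finset.sum_congr rfl fun i hi => ?_
          rw [Finset.mem_range] at hi
          rw [show ((k + 1 - i : ℕ) : ℤ) - 1 = (k - i : ℕ) by omega, eZF_natCast]
      rw [h3, eShift, show ((k + 1 : ℕ) : ℤ) - 1 = (k : ℕ) by push_cast; ring, eZF_natCast,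
        eZF_natCast]
      simp only [map_mul, map_add, map_natCast, map_one]
      ring

theorem Phi_eZF (n : ℤ) : Phi (eZF n) = eShift n := by
  rcases lt_or_ge n 0 with h | h
  · rw [eShift, eZF_neg h, eZF_neg (by omega)]
    simp
  · obtain ⟨n, rfl⟩ := Int.eq_ofNat_of_zero_le h
    rw [eZF_natCast, Phi_eeF]

/-! ### Bidiagonal column combinations of an `N × (N+1)` matrix -/

/-- For an `N × (N+1)` matrix `A` with columns `A_0, …, A_N`, the determinant with columns
`A_{c+1} + s·A_c` expands into the maximal minors of `A`.  Both sides equal the determinant of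
`A` bordered on top by the row `((−s)^c)_c`, which the column operations
`col_{c+1} += s·col_c` reduce to `(1, 0, …, 0)`. -/
theorem det_bidiag {R : Type*} [CommRing R] {N : ℕ} (A : Matrix (Fin N) (Fin (N+1)) R) (s : R) :
    (Matrix.of fun i c : Fin N => A i c.succ + s * A i c.castSucc).det =
      ∑ j : Fin (N+1), s ^ (j : ℕ) * (A.submatrix id j.succAbove).det := by
  let V : Matrix (Fin (N+1)) (Fin (N+1)) R :=
    Matrix.of (Fin.cons (fun c : Fin (N+1) => (-s) ^ (c : ℕ)) fun i => A i)
  let B : Matrix (Fin (N+1)) (Fin (N+1)) R :=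
    Matrix.of (Fin.cons (Fin.cons 1 fun _ => 0) fun i =>
      Fin.cons (A i 0) fun c : Fin N => A i c.succ + s * A i c.castSucc)
  have hVB : V.det = B.det := by
    refine Matrix.det_eq_of_forall_col_eq_smul_add_pred (fun _ => -s) ?_ ?_
    · intro i
      refine Fin.cases ?_ (fun i => ?_) i <;> simp [V, B]
    · intro i c
      refine Fin.cases ?_ (fun i => ?_) i
      · simp [V, B, pow_succ]
        ring
      · simp [V, B]
  have h1 : V.det = ∑ j : Fin (N+1), s ^ (j : ℕ) * (A.submatrix id j.succAbove).det := by
    rw [Matrix.det_succ_row_zero]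
    refine Finset.sum_congr rfl fun j _ => ?_
    have : (-1 : R) ^ (j : ℕ) * V 0 j = s ^ (j : ℕ) := by
      simp [V, ← mul_pow]
    rw [this]
    rfl
  have h2 : B.det = (Matrix.of fun i c : Fin N => A i c.succ + s * A i c.castSucc).det := by
    rw [Matrix.det_succ_row_zero, Fin.sum_univ_succ]
    simp only [B, Matrix.of_apply, Fin.cons_zero, Fin.cons_succ, Fin.val_zero, pow_zero, mul_one,
      one_mul, mul_zero, zero_mul, Finset.sum_const_zero, add_zero]
    congr 1
  rw [← h1, hVB, h2]

/-- Polynomial version of `det_bidiag`: the coefficient of `s^j` is the maximal minor of `A`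
omitting column `j`. -/
theorem coeff_det_bidiag {R : Type*} [CommRing R] {N : ℕ} (A : Matrix (Fin N) (Fin (N+1)) R)
    (j : Fin (N+1)) :
    (Matrix.of fun i c : Fin N => Polynomial.C (A i c.succ) +
      Polynomial.X * Polynomial.C (A i c.castSucc)).det.coeff j =
      (A.submatrix id j.succAbove).det := by
  have h := det_bidiag (A.map (Polynomial.C : R →+* Polynomial R)) Polynomial.X
  simp only [Matrix.map_apply] at h
  rw [h, Polynomial.finsetSum_coeff]
  have h2 : ∀ k : Fin (N+1), ((A.map (Polynomial.C : R →+* Polynomial R)).submatrix id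
      k.succAbove).det = Polynomial.C (A.submatrix id k.succAbove).det := by
    intro k
    rw [RingHom.map_det]
    rfl
  simp only [h2, Polynomial.coeff_X_pow_mul', Polynomial.coeff_C]
  rw [Finset.sum_eq_single j]
  · simp
  · intro k _ hk
    have : (k : ℕ) ≠ j := fun h => hk (Fin.ext h)
    split_ifs <;> first | rfl | omega
  · simp

theorem coeff_det_bidiag_of_lt {R : Type*} [CommRing R] {N : ℕ} (A : Matrix (Fin N) (Fin (N+1)) R)
    (j : ℕ) (hj : N < j) :
    (Matrix.of fun i c : Fin N => Polynomial.C (A i c.succ) +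
      Polynomial.X * Polynomial.C (A i c.castSucc)).det.coeff j = 0 := by
  have h := det_bidiag (A.map (Polynomial.C : R →+* Polynomial R)) Polynomial.X
  simp only [Matrix.map_apply] at h
  rw [h, Polynomial.finsetSum_coeff]
  have h2 : ∀ k : Fin (N+1), ((A.map (Polynomial.C : R →+* Polynomial R)).submatrix id
      k.succAbove).det = Polynomial.C (A.submatrix id k.succAbove).det := by
    intro k
    rw [RingHom.map_det]
    rfl
  simp only [h2, Polynomial.coeff_X_pow_mul', Polynomial.coeff_C]
  refine Finset.sum_eq_zero fun k _ => ?_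
  have := k.2
  split_ifs <;> first | rfl | omega

/-! ### The dual Bernstein operator -/

/-- `Phi` of an `e`-determinant is of the bidiagonal shape treated in `det_bidiag`. -/
theorem Phi_schurEF {t : ℕ} (ν : Fin t → ℤ) :
    Phi (schurEF ν) = (Matrix.of fun i c : Fin t =>
      Polynomial.C (Matrix.of (fun (i : Fin t) (c : Fin (t+1)) =>
        eZF (ν i - (i.1 : ℤ) - 1 + (c.1 : ℤ))) i c.succ) +
      Polynomial.X * Polynomial.C (Matrix.of (fun (i : Fin t) (c : Fin (t+1)) =>
        eZF (ν i - (i.1 : ℤ) - 1 + (c.1 : ℤ))) i c.castSucc)).det := by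
  rw [schurEF, AlgHom.map_det]
  congr 1
  ext1 i c
  simp only [AlgHom.mapMatrix_apply, Matrix.map_apply, Matrix.of_apply, Phi_eZF, eShift,
    Fin.val_succ, Fin.val_castSucc]
  rw [show ν i - (i.1 : ℤ) - 1 + ((c.1 + 1 : ℕ) : ℤ) = ν i - i.1 + c.1 by push_cast; ring,
    show ν i - (i.1 : ℤ) - 1 + (c.1 : ℤ) = ν i - i.1 + c.1 - 1 by ring]

/-- The operator `∑_j (−1)^j e_{B+j} h_j(∂)` prepends `B` to an `e`-determinant: expansion of
the determinant along its first row. -/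
theorem bernstein_schurEF {t : ℕ} (B : ℤ) (ν : Fin t → ℤ) (M : ℕ)
    (hM : (Phi (schurEF ν)).natDegree < M) :
    ∑ j ∈ Finset.range M, (-1 : Fq) ^ j • (eZF (B + j) * (Phi (schurEF ν)).coeff j) =
      schurEF (Fin.cons B ν : Fin (t+1) → ℤ) := by
  have h1 : ∑ j ∈ Finset.range M, (-1 : Fq) ^ j • (eZF (B + j) * (Phi (schurEF ν)).coeff j) =
      ∑ j ∈ Finset.range (t+1), (-1 : Fq) ^ j • (eZF (B + j) * (Phi (schurEF ν)).coeff j) := by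
    have hz1 : ∀ j, M ≤ j → (Phi (schurEF ν)).coeff j = 0 := fun j hj =>
      Polynomial.coeff_eq_zero_of_natDegree_lt (by omega)
    have hz2 : ∀ j, t < j → (Phi (schurEF ν)).coeff j = 0 := fun j hj => by
      rw [Phi_schurEF]; exact coeff_det_bidiag_of_lt _ j hj
    rcases le_total M (t+1) with h | h
    · refine Finset.sum_subset (Finset.range_mono h) fun j _ hj => ?_
      rw [Finset.mem_range, not_lt] at hj
      rw [hz1 j hj, mul_zero, smul_zero]
    · symm
      refine Finset.sum_subset (Finset.range_mono h) fun j _ hj => ?_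
      rw [Finset.mem_range, not_lt] at hj
      rw [hz2 j hj, mul_zero, smul_zero]
  rw [h1, schurEF.eq_def (Fin.cons B ν), Matrix.det_succ_row_zero, Finset.sum_range]
  refine Finset.sum_congr rfl fun j _ => ?_
  rw [Phi_schurEF, coeff_det_bidiag, Algebra.smul_def]
  simp only [map_pow, map_neg, map_one, Matrix.of_apply, Fin.cons_zero, Fin.val_zero]
  rw [mul_assoc]
  congr 2
  · push_cast; ring_nf
  · congr 1
    ext1 i c
    simp only [Matrix.submatrix_apply, Matrix.of_apply, Fin.cons_succ, Fin.val_succ, id]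
    congr 1
    push_cast; ring

/-! ### Duality: `h`-determinants and `e`-determinants of conjugate partitions -/

/-- Jacobi's complementary minor formula for a pair of inverse block matrices. -/
theorem det_toBlocks₁₁_eq {m n R : Type*} [Fintype m] [Fintype n] [DecidableEq m] [DecidableEq n]
    [CommRing R] (A B : Matrix (m ⊕ n) (m ⊕ n) R) (h : A * B = 1) :
    A.toBlocks₁₁.det = A.det * B.toBlocks₂₂.det := by
  have h' := h
  rw [← Matrix.fromBlocks_toBlocks A, ← Matrix.fromBlocks_toBlocks B,
    Matrix.fromBlocks_multiply, ← Matrix.fromBlocks_one, Matrix.fromBlocks_inj] at h'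
  obtain ⟨-, h12, -, h22⟩ := h'
  have key : A * Matrix.fromBlocks 1 B.toBlocks₁₂ 0 B.toBlocks₂₂ =
      Matrix.fromBlocks A.toBlocks₁₁ 0 A.toBlocks₂₁ 1 := by
    conv_lhs => rw [← Matrix.fromBlocks_toBlocks A]
    rw [Matrix.fromBlocks_multiply, h12, h22]
    simp
  have := congrArg Matrix.det key
  rw [Matrix.det_mul, Matrix.det_fromBlocks_zero₂₁, Matrix.det_fromBlocks_zero₁₂] at this
  simpa using this.symm

/-- The lower unitriangular Toeplitz matrix `(h_{a−b})`. -/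
def hToep (N : ℕ) : Matrix (Fin N) (Fin N) LamF :=
  Matrix.of fun a b => hZF ((a.1 : ℤ) - b.1)

/-- The lower unitriangular Toeplitz matrix `((−1)^{a−b} e_{a−b})`, inverse to `hToep`. -/
def eToep (N : ℕ) : Matrix (Fin N) (Fin N) LamF :=
  Matrix.of fun a b => (-1) ^ (a.1 + b.1) * eZF ((a.1 : ℤ) - b.1)

theorem det_hToep (N : ℕ) : (hToep N).det = 1 := by
  rw [Matrix.det_of_isLowerTriangular]
  · simp [hToep, hZF, hhF_zero]
  · intro a b hab
    have : a < b := hab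
    exact hZF_neg (by have : a.1 < b.1 := this; omega)

theorem sum_ee_hh' (d : ℕ) :
    ∑ a ∈ Finset.range (d + 1), (-1 : LamF) ^ a * (eeF a * hhF (d - a)) =
      if d = 0 then 1 else 0 := by
  rw [← sum_ee_hh]
  refine Finset.sum_congr rfl fun a _ => ?_
  rw [Algebra.smul_def]
  simp

/-- `∑_k (−1)^k e_{k−b} h_{a−k} = ± δ_{ab}` over any range containing `[b, a]`. -/
theorem toep_conv (N a b : ℕ) (ha : a < N) :
    ∑ k ∈ Finset.range N, hZF ((a : ℤ) - k) * ((-1) ^ (k + b) * eZF ((k : ℤ) - b)) =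
      if a = b then 1 else 0 := by
  rcases lt_or_ge a b with h | h
  · rw [if_neg (by omega)]
    refine Finset.sum_eq_zero fun k _ => ?_
    rcases lt_or_ge k b with hk | hk
    · rw [eZF_neg (by omega)]; simp
    · rw [hZF_neg (by omega)]; simp
  · obtain ⟨d, rfl⟩ : ∃ d, a = b + d := ⟨a - b, by omega⟩
    rw [← Finset.sum_subset (s₁ := Finset.Ico b (b + d + 1))]
    · rw [Finset.sum_Ico_eq_sum_range, show b + d + 1 - b = d + 1 by omega]
      have : (if b + d = b then 1 else 0 : LamF) = if d = 0 then 1 else 0 := by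
        congr 1; simp
      rw [this, ← sum_ee_hh']
      refine Finset.sum_congr rfl fun c hc => ?_
      rw [Finset.mem_range] at hc
      rw [show ((b + d : ℕ) : ℤ) - ((b + c : ℕ) : ℤ) = ((d - c : ℕ) : ℤ) by omega,
        show ((b + c : ℕ) : ℤ) - b = (c : ℕ) by push_cast; ring, hZF_natCast, eZF_natCast,
        show b + c + b = c + 2 * b by ring, pow_add, pow_mul]
      simp only [even_two, Even.neg_pow, one_pow, mul_one]
      ring
    · intro k hk
      simp only [Finset.mem_Ico, Finset.mem_range] at *
      omega
    · intro k _ hk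
      simp only [Finset.mem_Ico, not_and_or, not_le, not_lt] at hk
      rcases hk with hk | hk
      · rw [eZF_neg (by omega)]; simp
      · rw [hZF_neg (by omega)]; simp

theorem hToep_mul_eToep (N : ℕ) : hToep N * eToep N = 1 := by
  ext1 a b
  rw [Matrix.mul_apply, Matrix.one_apply]
  have := toep_conv N a.1 b.1 a.2
  rw [Finset.sum_range] at this
  simp only [Fin.ext_iff]
  exact this

/-- The sign of the permutation attached to a pair of conjugate partitions in an `l × t` box:
its inversions are the cells of the diagram. -/
theorem sign_conj_perm {l t : ℕ} (α : Fin l → ℕ) (β : Fin t → ℕ) (hα : Antitone α)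
    (hβ : Antitone β) (hβl : ∀ j, β j ≤ l)
    (hc : ∀ i j, j.1 < α i ↔ i.1 < β j) (ρ : Equiv.Perm (Fin (l + t)))
    (h1 : ∀ i : Fin l, (ρ (Fin.castAdd t i.rev)).1 = α i + (l - 1 - i.1))
    (h2 : ∀ j : Fin t, (ρ (Fin.natAdd l j)).1 = l + j.1 - β j) :
    Equiv.Perm.sign ρ = (-1) ^ (∑ j, β j) := by
  rw [Equiv.Perm.sign_eq_prod_prod_Iio, Fin.prod_univ_add]
  have e1 : ∀ x : Fin l, ∏ i ∈ Finset.Iio (Fin.castAdd t x),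
      (if ρ i < ρ (Fin.castAdd t x) then (1 : ℤˣ) else -1) = 1 := by
    intro x
    refine Finset.prod_eq_one fun y hy => ?_
    have hy' : y.1 < x.1 := by simpa [Fin.lt_def] using hy
    rw [if_pos]
    obtain ⟨y, rfl⟩ : ∃ y' : Fin l, y = Fin.castAdd t y' := ⟨⟨y.1, by omega⟩, rfl⟩
    have a1 := h1 x.rev
    have a2 := h1 y.rev
    rw [Fin.rev_rev] at a1 a2
    rw [Fin.lt_def, a1, a2]
    have : α y.rev ≤ α x.rev := hα (by rw [Fin.rev_le_rev]; exact le_of_lt hy')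
    simp only [Fin.val_rev, Fin.val_castAdd] at *
    omega
  have e2 : ∀ j : Fin t, ∏ i ∈ Finset.Iio (Fin.natAdd l j),
      (if ρ i < ρ (Fin.natAdd l j) then (1 : ℤˣ) else -1) = (-1) ^ β j := by
    intro j
    rw [show Finset.Iio (Fin.natAdd l j) = Finset.univ.filter (fun x => x < Fin.natAdd l j) by
      ext; simp, Finset.prod_filter, Fin.prod_univ_add]
    have e3 : ∏ k : Fin t, (if Fin.natAdd l k < Fin.natAdd l j then
        (if ρ (Fin.natAdd l k) < ρ (Fin.natAdd l j) then (1 : ℤˣ) else -1) else 1) = 1 := by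
      refine Finset.prod_eq_one fun k _ => ?_
      split_ifs with g1 g2
      · rfl
      · exfalso
        apply g2
        rw [Fin.lt_def, h2, h2]
        have : k < j := by simpa using g1
        have hb := hβ this.le
        have := hβl k
        have : k.1 < j.1 := ‹k < j›
        omega
      · rfl
    rw [e3, mul_one, ← Equiv.prod_comp Fin.revPerm]
    have e4 : ∀ i : Fin l, (if Fin.castAdd t (Fin.revPerm i) < Fin.natAdd l j then
        (if ρ (Fin.castAdd t (Fin.revPerm i)) < ρ (Fin.natAdd l j) then (1 : ℤˣ) else -1) else 1)
        = if i.1 < β j then -1 else 1 := by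
      intro i
      rw [if_pos (by rw [Fin.lt_def]; simp; omega)]
      simp only [Fin.revPerm_apply, Fin.lt_def, h1, h2]
      have := hc i j
      have := hβl j
      have := i.2
      by_cases h : i.1 < β j
      · rw [if_pos h, if_neg (by omega)]
      · rw [if_neg h, if_pos (by omega)]
    rw [Finset.prod_congr rfl fun i _ => e4 i, Finset.prod_ite]
    simp only [Finset.prod_const, one_pow, mul_one]
    rw [Fin.card_filter_val_lt, min_eq_right (hβl j)]
  rw [Finset.prod_congr rfl fun x _ => e1 x, Finset.prod_congr rfl fun j _ => e2 j,
    Finset.prod_const_one, one_mul, Finset.prod_pow_eq_pow_sum]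

/-- Jacobi–Trudi duality `det (h_{α_i−i+j}) = det (e_{β_i−i+j})` for conjugate partitions `α`,
`β` (possibly padded by zeros) in an `l × t` box. -/
theorem schurF_eq_schurEF {l t : ℕ} (α : Fin l → ℕ) (β : Fin t → ℕ) (hα : Antitone α)
    (hβ : Antitone β) (hαt : ∀ i, α i ≤ t) (hβl : ∀ j, β j ≤ l)
    (hc : ∀ i j, j.1 < α i ↔ i.1 < β j) :
    schurF (fun i => (α i : ℤ)) = schurEF (fun j => (β j : ℤ)) := by
  let τ : Fin l ⊕ Fin t ≃ Fin (l + t) :=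
    (Equiv.sumCongr Fin.revPerm (Equiv.refl _)).trans finSumFinEquiv
  let f : Fin l ⊕ Fin t → Fin (l + t) := Sum.elim
    (fun i => ⟨α i + (l - 1 - i.1), by have := hαt i; have := i.2; omega⟩)
    (fun j => ⟨l + j.1 - β j, by have := j.2; omega⟩)
  have hf : Function.Injective f := by
    have hl : ∀ i i' : Fin l, i < i' → f (Sum.inl i) ≠ f (Sum.inl i') := by
      intro i i' h he
      have := congrArg Fin.val he
      simp only [f, Sum.elim_inl] at this
      have h1 := hα h.le
      have h2 : i.1 < i'.1 := h
      have := i'.2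
      omega
    have hr : ∀ i i' : Fin t, i < i' → f (Sum.inr i) ≠ f (Sum.inr i') := by
      intro i i' h he
      have := congrArg Fin.val he
      simp only [f, Sum.elim_inr] at this
      have h1 := hβ h.le
      have h2 : i.1 < i'.1 := h
      have := hβl i
      omega
    have hlr : ∀ (i : Fin l) (j : Fin t), f (Sum.inl i) ≠ f (Sum.inr j) := by
      intro i j he
      have := congrArg Fin.val he
      simp only [f, Sum.elim_inl, Sum.elim_inr] at this
      have := hc i j
      have := hβl j
      have := i.2
      omega
    rintro (i | i) (j | j) h
    · rcases lt_trichotomy i j with g | g | g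
      · exact absurd h (hl _ _ g)
      · rw [g]
      · exact absurd h.symm (hl _ _ g)
    · exact absurd h (hlr _ _)
    · exact absurd h.symm (hlr _ _)
    · rcases lt_trichotomy i j with g | g | g
      · exact absurd h (hr _ _ g)
      · rw [g]
      · exact absurd h.symm (hr _ _ g)
  let σ : Fin l ⊕ Fin t ≃ Fin (l + t) :=
    Equiv.ofBijective f ((Fintype.bijective_iff_injective_and_card f).2 ⟨hf, by simp⟩)
  have hτl : ∀ i, τ (Sum.inl i) = Fin.castAdd t i.rev := fun i => by simp [τ]
  have hτr : ∀ j, τ (Sum.inr j) = Fin.natAdd l j := fun j => by simp [τ]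
  have hσl : ∀ i, (σ (Sum.inl i)).1 = α i + (l - 1 - i.1) := fun i => rfl
  have hσr : ∀ j, (σ (Sum.inr j)).1 = l + j.1 - β j := fun j => rfl
  let ρ : Equiv.Perm (Fin (l + t)) := τ.symm.trans σ
  have hsign : Equiv.Perm.sign ρ = (-1) ^ (∑ j, β j) := by
    refine sign_conj_perm α β hα hβ hβl hc ρ (fun i => ?_) (fun j => ?_)
    · rw [← hτl]; simp only [ρ, Equiv.trans_apply, Equiv.symm_apply_apply, hσl]
    · rw [← hτr]; simp only [ρ, Equiv.trans_apply, Equiv.symm_apply_apply, hσr]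
  have hdetA : ((hToep (l+t)).submatrix σ τ).det = (-1) ^ (∑ j, β j) := by
    have : (hToep (l+t)).submatrix σ τ = ((hToep (l+t)).submatrix ρ id).submatrix τ τ := by
      ext1 a b
      simp [ρ]
    rw [this, Matrix.det_submatrix_equiv_self, Matrix.det_permute, det_hToep, hsign]
    simp
  have hAB : (hToep (l+t)).submatrix σ τ * (eToep (l+t)).submatrix τ σ = 1 := by
    rw [Matrix.submatrix_mul_equiv, hToep_mul_eToep, Matrix.submatrix_one_equiv]
  have key := det_toBlocks₁₁_eq _ _ hAB
  have h11 : ((hToep (l+t)).submatrix σ τ).toBlocks₁₁ =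
      Matrix.of fun i j : Fin l => hZF ((α i : ℤ) - (i.1 : ℤ) + (j.1 : ℤ)) := by
    ext1 i j
    simp only [Matrix.toBlocks₁₁, Matrix.submatrix_apply, Matrix.of_apply, hToep, hτl, hσl]
    congr 1
    simp only [Fin.val_castAdd, Fin.val_rev]
    have := i.2; have := j.2
    omega
  have h22 : ((eToep (l+t)).submatrix τ σ).toBlocks₂₂.det =
      (-1) ^ (∑ j, β j) * schurEF (fun j => (β j : ℤ)) := by
    rw [← Matrix.det_transpose]
    have : (((eToep (l+t)).submatrix τ σ).toBlocks₂₂).transpose =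
        Matrix.of fun k j : Fin t => (-1) ^ j.1 * (Matrix.of (fun k j : Fin t =>
          (-1) ^ (k.1 + β k) * (Matrix.of (fun k j : Fin t =>
            eZF ((β k : ℤ) - (k.1 : ℤ) + (j.1 : ℤ)))) k j) k j) := by
      ext1 k j
      simp only [Matrix.transpose_apply, Matrix.toBlocks₂₂, Matrix.submatrix_apply,
        Matrix.of_apply, eToep, hτr, hσr]
      rw [← mul_assoc, ← pow_add]
      congr 1
      · simp only [Fin.val_natAdd]
        have := hβl k
        -- the exponents differ by an even number
        apply neg_one_pow_congr
        simp only [Nat.even_iff]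
        omega
      · congr 1
        simp only [Fin.val_natAdd]
        have := hβl k
        omega
    rw [this, Matrix.det_mul_row, Matrix.det_mul_column, ← mul_assoc, ← Finset.prod_mul_distrib]
    congr 1
    rw [← Finset.prod_pow_eq_pow_sum]
    refine Finset.prod_congr rfl fun k _ => ?_
    rw [← pow_add, ← add_assoc, ← two_mul, pow_add, pow_mul]
    simp
  rw [h11, h22, hdetA, ← mul_assoc, ← mul_pow] at key
  rw [schurF, key]
  simp

/-! ### Straightening of dual Schur functions -/

/-- Only a degenerate tuple has no sorting permutation. -/
theorem exists_sorts {r : ℕ} (ν : Fin r → ℤ)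
    (h : Function.Injective fun i => ν i + deltaT r i) : ∃ σ, Sorts ν σ := by
  let f : Fin r → ℤ := fun i => -(ν i + deltaT r i)
  have hm : Monotone (f ∘ Tuple.sort f) := Tuple.monotone_sort f
  have hf : Function.Injective f := fun a b hab => h (neg_injective hab)
  have hinj : Function.Injective (f ∘ Tuple.sort f) := hf.comp (Tuple.sort f).injective
  refine ⟨Tuple.sort f, fun i j hij => ?_⟩
  exact neg_lt_neg_iff.1 (hm.strictMono_of_injective hinj hij)

/-- The rows of the `e`-determinant depend on `ν` only through the entries of `ν + δ`. -/
theorem schurEF_rows {r : ℕ} (ν : Fin r → ℤ) : schurEF ν =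
    (Matrix.of fun i j : Fin r => eZF (ν i + deltaT r i - (r : ℤ) + 1 + (j.1 : ℤ))).det := by
  unfold schurEF
  congr 2
  ext1 i
  ext1 j
  congr 1
  simp only [deltaT]
  ring

theorem schurEF_degenerate {r : ℕ} (ν : Fin r → ℤ) (h : ¬ ∃ σ, Sorts ν σ) : schurEF ν = 0 := by
  have h1 : ¬ Function.Injective fun i => ν i + deltaT r i := fun hi => h (exists_sorts ν hi)
  simp only [Function.Injective, not_forall] at h1
  obtain ⟨a, b, hab, hne⟩ := h1
  rw [schurEF_rows]
  refine Matrix.det_zero_of_row_eq hne ?_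
  ext1 j
  simp only [Matrix.of_apply]
  rw [hab]

theorem schurEF_eq_sgnT_smul {r : ℕ} (ν : Fin r → ℤ) (h : ∃ σ, Sorts ν σ) :
    schurEF ν = (sgnT ν : Fq) • schurEF (piT ν) := by
  rw [schurEF_rows ν, schurEF_rows (piT ν), sgnT, dif_pos h]
  have h1 : (Matrix.of fun i j : Fin r =>
      eZF (piT ν i + deltaT r i - (r : ℤ) + 1 + (j.1 : ℤ))) =
      (Matrix.of fun i j : Fin r =>
        eZF (ν i + deltaT r i - (r : ℤ) + 1 + (j.1 : ℤ))).submatrix h.choose id := by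
    ext1 i j
    simp only [Matrix.submatrix_apply, Matrix.of_apply, piT, dif_pos h, id]
    congr 1
    ring
  rw [h1, Matrix.det_permute]
  rcases Int.units_eq_one_or (Equiv.Perm.sign h.choose) with g | g <;> simp [g]

theorem piT_antitone {r : ℕ} (ν : Fin r → ℤ) : Antitone (piT ν) := by
  by_cases h : ∃ σ, Sorts ν σ
  · cases r with
    | zero => intro i; exact i.elim0
    | succ r =>
      rw [Fin.antitone_iff_succ_le]
      intro i
      have h1 := h.choose_spec (Fin.castSucc_lt_succ (i := i))
      simp only [piT, dif_pos h]
      simp only at h1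
      have h2 : deltaT (r+1) i.castSucc = deltaT (r+1) i.succ + 1 := by
        simp [deltaT]
        ring
      omega
  · simp only [piT, dif_neg h]
    exact antitone_const

/-- The last entry is negative, so the last row of the determinant is zero. -/
theorem schurEF_eq_zero_of_neg {r : ℕ} (ν : Fin r → ℤ) (ha : Antitone ν)
    (h : ∃ i, ν i < 0) : schurEF ν = 0 := by
  obtain ⟨i, hi⟩ := h
  cases r with
  | zero => exact i.elim0
  | succ r =>
    have hl : ν (Fin.last r) < 0 := lt_of_le_of_lt (ha (Fin.le_last i)) hi
    refine Matrix.det_eq_zero_of_row_eq_zero (Fin.last r) fun j => ?_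
    simp only [Matrix.of_apply]
    refine eZF_neg ?_
    have := j.2
    simp only [Fin.val_last]
    omega

/-! ### The vertical Pieri rule -/

/-- The `N × (N+1)` Jacobi–Trudi matrix `h_{ρ_i−i+c}`, with one extra column. -/
def wideJT {N : ℕ} (ρ : Fin N → ℤ) : Matrix (Fin N) (Fin (N+1)) LamF :=
  Matrix.of fun i c => hZF (ρ i - (i.1 : ℤ) + (c.1 : ℤ))

/-- Deleting the column `N−b` of the wide Jacobi–Trudi matrix multiplies `s_ρ` by `e_b`, once the
last `b` rows of `ρ` vanish: modulo the rows of the matrix, the unit vector at `N−b` is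
`(−1)^b e_b` times the unit vector at `N`, because `(e_k)` inverts `(h_k)` up to signs. -/
theorem det_wideJT_minor {N : ℕ} (ρ : Fin N → ℤ) (b : ℕ) (hb : b ≤ N)
    (hρ : ∀ i : Fin N, N - b ≤ i.1 → ρ i = 0) (k₀ : Fin (N+1)) (hk₀ : k₀.1 = N - b) :
    ((wideJT ρ).submatrix id k₀.succAbove).det = eeF b * schurF ρ := by
  set M : Fin (N+1) → LamF := fun c => ((wideJT ρ).submatrix id c.succAbove).det with hM
  -- `L v` is the determinant of the matrix with the extra row `v` appended at the bottom
  let L : (Fin (N+1) → LamF) → LamF := fun v => ∑ c, (-1) ^ (N + c.1) * v c * M c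
  have hL : ∀ i, L (wideJT ρ i) = 0 := by
    intro i
    have h := Matrix.det_succ_row (Matrix.of fun a c : Fin (N+1) =>
      (Fin.snoc (α := fun _ => Fin (N+1) → LamF) (fun a' => wideJT ρ a') (wideJT ρ i) :
        Fin (N+1) → Fin (N+1) → LamF) a c) (Fin.last N)
    have h0 : (Matrix.of fun a c : Fin (N+1) =>
      (Fin.snoc (α := fun _ => Fin (N+1) → LamF) (fun a' => wideJT ρ a') (wideJT ρ i) :
        Fin (N+1) → Fin (N+1) → LamF) a c).det = 0 := by
      refine Matrix.det_zero_of_row_eq (i := i.castSucc) (j := Fin.last N)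
        (Fin.castSucc_lt_last i).ne ?_
      ext1 c
      simp [Matrix.of_apply]
    rw [h0] at h
    rw [h]
    refine Finset.sum_congr rfl fun c _ => ?_
    simp only [Matrix.of_apply, Fin.snoc_last, Fin.val_last, hM]
    congr 2
    ext1 a d
    simp [Matrix.submatrix_apply]
  have hrow : ∀ k ∈ Finset.range (N+1), k ≠ N →
      (-1) ^ (k + k₀.1) * eZF ((k : ℤ) - (k₀.1 : ℤ)) *
        L (fun c => hZF ((c.1 : ℤ) - (k : ℤ))) = 0 := by
    intro k hk hkN
    rw [Finset.mem_range] at hk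
    by_cases h : k < k₀.1
    · rw [eZF_neg (by omega), mul_zero, zero_mul]
    · have h1 := hL ⟨k, by omega⟩
      have h2 : wideJT ρ ⟨k, by omega⟩ = fun c => hZF ((c.1 : ℤ) - (k : ℤ)) := by
        ext1 c
        simp only [wideJT, Matrix.of_apply]
        rw [hρ ⟨k, by omega⟩ (by simp only; omega)]
        congr 1
        ring
      rw [← h2, h1, mul_zero]
  have hunit : L (Pi.single k₀ 1) = (-1) ^ (N + k₀.1) * M k₀ := by
    simp only [L]
    rw [Finset.sum_eq_single k₀]
    · simp
    · intro c _ hc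
      simp [Pi.single_eq_of_ne hc]
    · simp
  have hlast : L (fun c => hZF ((c.1 : ℤ) - (N : ℤ))) = schurF ρ := by
    simp only [L]
    rw [Finset.sum_eq_single (Fin.last N)]
    · have h1 : M (Fin.last N) = schurF ρ := by
        simp only [hM, schurF]
        congr 1
        ext1 a d
        simp [wideJT]
      rw [h1]
      have h2 : hZF 0 = 1 := by
        have := hZF_natCast 0
        rw [hhF_zero] at this
        simpa using this
      simp [h2, ← two_mul]
    · intro c _ hc
      have : c.1 < N := Fin.val_lt_last hc
      rw [hZF_neg (by omega)]
      simp
    · simp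
  have hexp : L (Pi.single k₀ 1) = ∑ k ∈ Finset.range (N+1),
      (-1) ^ (k + k₀.1) * eZF ((k : ℤ) - (k₀.1 : ℤ)) *
        L (fun c => hZF ((c.1 : ℤ) - (k : ℤ))) := by
    simp only [L, Finset.mul_sum]
    rw [Finset.sum_comm]
    refine Finset.sum_congr rfl fun c _ => ?_
    have h1 : (Pi.single k₀ (1 : LamF) : Fin (N+1) → LamF) c = if c.1 = k₀.1 then 1 else 0 := by
      rw [Pi.single_apply]
      simp only [Fin.ext_iff]
    rw [h1, ← toep_conv (N+1) c.1 k₀.1 c.2, Finset.mul_sum, Finset.sum_mul]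
    refine Finset.sum_congr rfl fun k _ => ?_
    ring
  rw [Finset.sum_eq_single_of_mem N (by simp) hrow, hunit, hlast] at hexp
  have h3 : (N : ℤ) - (k₀.1 : ℤ) = (b : ℤ) := by omega
  rw [h3, eZF_natCast, mul_assoc] at hexp
  exact ((isUnit_one.neg.pow _).mul_right_injective hexp : _)

/-- Unordered vertical Pieri rule: raise any `b` of the rows by one box. -/
theorem pieri_raw {N : ℕ} (ρ : Fin N → ℤ) (b : ℕ) (hb : b ≤ N)
    (hρ : ∀ i : Fin N, N - b ≤ i.1 → ρ i = 0) :
    eeF b * schurF ρ = ∑ s ∈ Finset.powersetCard b (Finset.univ : Finset (Fin N)),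
      schurF (fun i => ρ i + if i ∈ s then 1 else 0) := by
  rw [← det_wideJT_minor ρ b hb hρ ⟨N - b, by omega⟩ rfl, ← coeff_det_bidiag]
  have hadd := (Matrix.detRowAlternating (n := Fin N)
    (R := Polynomial LamF)).toMultilinearMap.map_add_univ
    (fun i c => Polynomial.C (wideJT ρ i c.succ))
    (fun i c => Polynomial.X * Polynomial.C (wideJT ρ i c.castSucc))
  have hterm : ∀ s : Finset (Fin N), (Matrix.detRowAlternating (n := Fin N)
      (R := Polynomial LamF)).toMultilinearMap (s.piecewise
        (fun i c => Polynomial.C (wideJT ρ i c.succ))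
        (fun i c => Polynomial.X * Polynomial.C (wideJT ρ i c.castSucc))) =
      Polynomial.C (schurF (fun i => ρ i + if i ∈ s then 1 else 0)) *
        Polynomial.X ^ (N - s.card) := by
    intro s
    have h1 : (s.piecewise
        (fun i c => Polynomial.C (wideJT ρ i c.succ))
        (fun i c => Polynomial.X * Polynomial.C (wideJT ρ i c.castSucc)) :
          Fin N → Fin N → Polynomial LamF) = fun i =>
        (if i ∈ s then (1 : Polynomial LamF) else Polynomial.X) •
          (fun c : Fin N => Polynomial.C (hZF ((ρ i + if i ∈ s then 1 else 0) - (i.1 : ℤ) +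
            (c.1 : ℤ)))) := by
      ext1 i
      ext1 c
      by_cases h : i ∈ s
      · simp only [Finset.piecewise_eq_of_mem _ _ _ h, if_pos h, Pi.smul_apply, one_smul,
          wideJT, Matrix.of_apply]
        congr 2
        simp only [Fin.val_succ]
        push_cast
        ring
      · simp only [Finset.piecewise_eq_of_notMem _ _ _ h, if_neg h, Pi.smul_apply, smul_eq_mul,
          wideJT, Matrix.of_apply, Fin.val_castSucc, add_zero]
    rw [h1, MultilinearMap.map_smul_univ, Finset.prod_ite]
    simp only [Finset.prod_const, one_pow, one_mul]
    rw [smul_eq_mul, mul_comm]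
    congr 1
    · rw [schurF, RingHom.map_det]
      rfl
    · congr 1
      rw [Finset.filter_not, Finset.card_sdiff]
      simp
  have hdet : (Matrix.of fun i c : Fin N => Polynomial.C (wideJT ρ i c.succ) +
      Polynomial.X * Polynomial.C (wideJT ρ i c.castSucc)).det =
      ∑ s : Finset (Fin N), Polynomial.C (schurF (fun i => ρ i + if i ∈ s then 1 else 0)) *
        Polynomial.X ^ (N - s.card) := by
    rw [← Finset.sum_congr rfl fun s _ => hterm s, ← hadd]
    rfl
  rw [hdet, Polynomial.finsetSum_coeff, Finset.powersetCard_eq_filter, Finset.sum_filter,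
    Finset.powerset_univ]
  refine Finset.sum_congr rfl fun s _ => ?_
  rw [Polynomial.coeff_C_mul, Polynomial.coeff_X_pow]
  have := s.card_le_univ
  rw [Fintype.card_fin] at this
  by_cases h : s.card = b
  · rw [if_pos (by simp only [h]), if_pos h, mul_one]
  · rw [if_neg (by simp only; omega), if_neg h, mul_zero]

/-- If raising rows destroys the partition shape, then some row `i` is overtaken by row `i+1`, and
these two rows of the determinant coincide. -/
theorem schurF_raise_eq_zero {N : ℕ} (ρ : Fin N → ℕ) (hρ : Antitone ρ) (s : Finset (Fin N))
    (h : ¬ Antitone fun i => ρ i + if i ∈ s then 1 else 0) :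
    schurF (fun i => (ρ i : ℤ) + if i ∈ s then 1 else 0) = 0 := by
  cases N with
  | zero => exact absurd (fun i => i.elim0) h
  | succ N =>
    rw [Fin.antitone_iff_succ_le] at h
    push Not at h
    obtain ⟨i, hi⟩ := h
    have h1 := hρ (Fin.castSucc_lt_succ (i := i)).le
    have h2 : i.castSucc ∉ s := fun h => by rw [if_pos h] at hi; split_ifs at hi <;> omega
    have h3 : i.succ ∈ s := by
      by_contra h
      rw [if_neg h] at hi
      omega
    rw [if_neg h2, if_pos h3] at hi
    refine Matrix.det_zero_of_row_eq (Fin.castSucc_lt_succ (i := i)).ne ?_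
    ext1 c
    simp only [Matrix.of_apply, if_neg h2, if_pos h3, Fin.val_succ, Fin.val_castSucc]
    congr 1
    push_cast
    omega

/-- The vertical Pieri rule `e_b s_ρ = ∑ s_λ`, over partitions `λ` in `N` rows such that
`λ − ρ` is a vertical `b`-strip; `N` is large enough for no such `λ` to be missed. -/
theorem pieri {N : ℕ} (ρ : Fin N → ℕ) (hρa : Antitone ρ) (b : ℕ) (hb : b ≤ N)
    (hρ : ∀ i : Fin N, N - b ≤ i.1 → ρ i = 0) :
    eeF b * schurF (fun i => (ρ i : ℤ)) =
      ∑ᶠ (lam : Fin N → ℕ) (_ : Antitone lam ∧ (∀ a, ρ a ≤ lam a) ∧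
        (∑ a, lam a = ∑ a, ρ a + b) ∧ (∀ a, lam a ≤ ρ a + 1)),
        schurF fun a => (lam a : ℤ) := by
  classical
  rw [pieri_raw (fun i => (ρ i : ℤ)) b hb (fun i hi => by rw [hρ i hi]; rfl)]
  let g : Finset (Fin N) → Fin N → ℕ := fun s i => ρ i + if i ∈ s then 1 else 0
  have hg : Function.Injective g := by
    intro s s' h
    ext i
    have := congrFun h i
    simp only [g] at this
    by_cases h1 : i ∈ s <;> by_cases h2 : i ∈ s' <;> simp_all
  have hset : {lam : Fin N → ℕ | Antitone lam ∧ (∀ a, ρ a ≤ lam a) ∧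
      (∑ a, lam a = ∑ a, ρ a + b) ∧ (∀ a, lam a ≤ ρ a + 1)} =
      ↑(((Finset.powersetCard b (Finset.univ : Finset (Fin N))).filter
        fun s => Antitone (g s)).image g) := by
    ext lam
    simp only [Set.mem_ofPred_eq, Finset.coe_image, Finset.coe_filter, Set.mem_image,
      Finset.mem_powersetCard, Finset.subset_univ, true_and]
    constructor
    · rintro ⟨h1, h2, h3, h4⟩
      have hlam : g (Finset.univ.filter fun a => ρ a < lam a) = lam := by
        ext a
        have := h2 a
        have := h4 a
        simp only [g, Finset.mem_filter, Finset.mem_univ, true_and]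
        split_ifs <;> omega
      refine ⟨Finset.univ.filter fun a => ρ a < lam a, ⟨?_, by rwa [hlam]⟩, hlam⟩
      rw [← hlam] at h3
      simp only [g, Finset.sum_add_distrib] at h3
      simpa [hlam] using h3
    · rintro ⟨s, ⟨h1, h2⟩, rfl⟩
      refine ⟨h2, fun a => by simp [g], ?_, fun a => ?_⟩
      · simp [g, Finset.sum_add_distrib, h1]
      · simp only [g]
        split_ifs <;> omega
  have hconv : (∑ᶠ (lam : Fin N → ℕ) (_ : Antitone lam ∧ (∀ a, ρ a ≤ lam a) ∧
        (∑ a, lam a = ∑ a, ρ a + b) ∧ (∀ a, lam a ≤ ρ a + 1)),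
        schurF fun a => (lam a : ℤ)) = ∑ᶠ lam ∈ {lam : Fin N → ℕ | Antitone lam ∧
          (∀ a, ρ a ≤ lam a) ∧ (∑ a, lam a = ∑ a, ρ a + b) ∧ (∀ a, lam a ≤ ρ a + 1)},
        schurF fun a => (lam a : ℤ) := rfl
  rw [hconv, hset, finsum_mem_coe_finset, Finset.sum_image (fun _ _ _ _ h => hg h),
    Finset.sum_filter]
  refine Finset.sum_congr rfl fun s _ => ?_
  split_ifs with h
  · congr 1
    ext1 a
    simp only [g]
    split_ifs <;> simp
  · exact schurF_raise_eq_zero ρ hρa s h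

/-! ### Conjugate partitions and the contribution of a single `j` -/

theorem lt_card_filter_iff {r : ℕ} (p : Fin r → Prop) [DecidablePred p]
    (hp : ∀ i k, i ≤ k → p k → p i) (i : Fin r) :
    i.1 < (Finset.univ.filter p).card ↔ p i := by
  constructor
  · intro h
    by_contra hi
    have hsub : Finset.univ.filter p ⊆ Finset.Iio i := by
      intro k hk
      rw [Finset.mem_filter] at hk
      rw [Finset.mem_Iio]
      by_contra hki
      exact hi (hp i k (not_lt.1 hki) hk.2)
    have := Finset.card_le_card hsub
    rw [Fin.card_Iio] at this
    omega
  · intro hi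
    have hsub : Finset.Iic i ⊆ Finset.univ.filter p := by
      intro k hk
      rw [Finset.mem_Iic] at hk
      rw [Finset.mem_filter]
      exact ⟨Finset.mem_univ _, hp k i hk hi⟩
    have := Finset.card_le_card hsub
    rw [Fin.card_Iic] at this
    omega

/-- The `c`-th entry (0-indexed) of the conjugate of `β`, as a natural number. -/
def conjN {r : ℕ} (β : Fin r → ℕ) (c : ℕ) : ℕ :=
  (Finset.univ.filter fun i : Fin r => c + 1 ≤ β i).card

theorem lt_conjN_iff {r : ℕ} (β : Fin r → ℕ) (hβ : Antitone β) (c : ℕ) (i : Fin r) :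
    i.1 < conjN β c ↔ c < β i :=
  lt_card_filter_iff _ (fun _ _ h h' => h'.trans (hβ h)) i

theorem conjN_antitone {r : ℕ} (β : Fin r → ℕ) : Antitone (conjN β) := by
  intro a b hab
  refine Finset.card_le_card fun i hi => ?_
  rw [Finset.mem_filter] at hi ⊢
  exact ⟨hi.1, by omega⟩

theorem conjN_le {r : ℕ} (β : Fin r → ℕ) (c : ℕ) : conjN β c ≤ r := by
  have := (Finset.univ.filter fun i : Fin r => c + 1 ≤ β i).card_le_univ
  rwa [Fintype.card_fin] at this

theorem conjN_eq_zero {r : ℕ} (β : Fin r → ℕ) (c : ℕ) (h : ∀ i, β i ≤ c) : conjN β c = 0 := by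
  rw [conjN, Finset.card_eq_zero, Finset.filter_eq_empty_iff]
  intro i _
  have := h i
  omega

theorem sum_conjN {r N : ℕ} (β : Fin r → ℕ) (h : ∀ i, β i ≤ N) :
    ∑ a : Fin N, conjN β a.1 = ∑ i, β i := by
  simp only [conjN, Finset.card_filter]
  rw [Finset.sum_comm]
  refine Finset.sum_congr rfl fun i _ => ?_
  rw [← Finset.card_filter]
  simp only [Nat.succ_le_iff]
  rw [Fin.card_filter_val_lt, min_eq_right (h i)]

/-- Duality with the conjugate padded by zeros to any sufficient number `N` of rows. -/
theorem schurF_conjN {r N : ℕ} (β : Fin r → ℕ) (hβ : Antitone β) (h : ∀ i, β i ≤ N) :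
    schurF (fun a : Fin N => (conjN β a.1 : ℤ)) = schurEF (fun c => (β c : ℤ)) :=
  schurF_eq_schurEF (fun a : Fin N => conjN β a.1) β (fun _ _ hab => conjN_antitone β hab) hβ
    (fun _ => conjN_le β _) h (fun a c => lt_conjN_iff β hβ a.1 c)

/-- `e_j · s_{ν'}`, straightened and expanded by the Pieri rule. -/
theorem sgnT_smul_strips {r : ℕ} (ν : Fin r → ℤ) (j : ℕ) :
    ((sgnT ν : Fq) • ∑ᶠ (lam : Fin ((∑ c, piT ν c).toNat + j + 1) → ℕ)
      (_ : Antitone lam ∧ IsPartitionT (piT ν) ∧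
        (∀ t' : ℕ, conjT (piT ν) t' ≤ padZ (fun a => (lam a : ℤ)) t') ∧
        ((∑ a, (lam a : ℤ)) = (∑ c, piT ν c) + j) ∧
        (∀ t' : ℕ, padZ (fun a => (lam a : ℤ)) t' ≤ conjT (piT ν) t' + 1)),
      schurF fun a => (lam a : ℤ)) = eeF j * schurEF ν := by
  by_cases h : ∃ σ, Sorts ν σ
  swap
  · rw [schurEF_degenerate ν h, sgnT, dif_neg h]
    simp
  rw [schurEF_eq_sgnT_smul ν h, mul_smul_comm]
  congr 1
  generalize hπ : piT ν = π
  have hanti : Antitone π := hπ ▸ piT_antitone ν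
  by_cases hpos : ∀ c, 0 ≤ π c
  swap
  · rw [schurEF_eq_zero_of_neg π hanti (by push Not at hpos; exact hpos), mul_zero]
    have hf : ∀ A B : Prop, ¬ (A ∧ IsPartitionT π ∧ B) := fun A B h => hpos h.2.1.2
    simp only [hf, finsum_false, finsum_zero]
  obtain ⟨β, rfl⟩ : ∃ β : Fin r → ℕ, π = fun c => (β c : ℤ) :=
    ⟨fun c => (π c).toNat, by ext c; rw [Int.toNat_of_nonneg (hpos c)]⟩
  have hβ : Antitone β := fun a b hab => Int.ofNat_le.1 (hanti hab)
  have hsum : (∑ c, (β c : ℤ)).toNat = ∑ c, β c := by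
    rw [← Nat.cast_sum, Int.toNat_natCast]
  have hle : ∀ c, β c ≤ ∑ c, β c := fun c =>
    Finset.single_le_sum (fun _ _ => Nat.zero_le _) (Finset.mem_univ c)
  have hconj : ∀ a, conjT (fun c => (β c : ℤ)) a = conjN β a := by
    intro a
    simp only [conjT, conjN]
    norm_cast
  generalize hN : (∑ c, (β c : ℤ)).toNat + j + 1 = N
  rw [hsum] at hN
  rw [← schurF_conjN β hβ (fun i => (hle i).trans (by omega : ∑ c, β c ≤ N)),
    pieri (fun a : Fin N => conjN β a.1) (fun _ _ hab => conjN_antitone β hab) j (by omega)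
      (fun i hi => conjN_eq_zero β _ fun c => (hle c).trans (by omega))]
  refine finsum_congr fun lam => finsum_congr_Prop (propext ?_) fun _ => rfl
  rw [sum_conjN β (fun i => (hle i).trans (by omega : ∑ c, β c ≤ N))]
  have hpad : ∀ t' (ht : t' < N), padZ (fun a => (lam a : ℤ)) t' = lam ⟨t', ht⟩ :=
    fun t' ht => by rw [padZ, dif_pos ht]
  have hpad0 : ∀ t', ¬ t' < N → padZ (fun a => (lam a : ℤ)) t' = 0 :=
    fun t' ht => by rw [padZ, dif_neg ht]
  simp only [hconj]
  constructor
  · rintro ⟨h1, -, h3, h4, h5⟩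
    refine ⟨h1, fun a => ?_, by exact_mod_cast h4, fun a => ?_⟩
    · have := h3 a.1
      rw [hpad a.1 a.2] at this
      exact_mod_cast this
    · have := h5 a.1
      rw [hpad a.1 a.2] at this
      exact_mod_cast this
  · rintro ⟨h1, h3, h4, h5⟩
    refine ⟨h1, ⟨hanti, hpos⟩, fun t' => ?_, by exact_mod_cast h4, fun t' => ?_⟩
    · by_cases ht : t' < N
      · rw [hpad t' ht]
        exact_mod_cast h3 ⟨t', ht⟩
      · rw [hpad0 t' ht, conjN_eq_zero β t' fun c => (hle c).trans (by omega)]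
        rfl
    · by_cases ht : t' < N
      · rw [hpad t' ht]
        exact_mod_cast h5 ⟨t', ht⟩
      · rw [hpad0 t' ht]
        positivity

/-! ### The action of `X_n^−` -/

/-- action of `X_n^-` on the Schur basis via vertical strips.  For a
partition `μ`, `m, n ∈ ℤ`, `i ∈ {0,1}` and `b_j := 2m−n−1+i−j`, with `μ'` the conjugate
partition of `μ`:
`X_n^- (s_μ e^{mα}e^{iα/2})
   = (−1)^{n+1+i} (∑_{j≥0} q^{2j} · sgn((b_j,μ')) · ∑_λ s_λ) e^{(m−1)α}e^{iα/2}`,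
where the inner sum is over all partitions `λ` such that `π((b_j,μ'))` is a partition
and `λ − π((b_j,μ'))'` is a vertical `j`-strip (`ρ'` denoting the conjugate of `ρ`);
only finitely many `j` contribute.  Partitions `λ` are represented as weakly decreasing
tuples in `ℕ^{K j}` where `K j := |π((b_j,μ'))| + j + 1` bounds the number of rows. -/
theorem Xminus_on_schur_basis (l : ℕ) (mu : Fin l → ℕ) (hmu : Antitone mu)
    (hmu1 : ∀ k, 1 ≤ mu k) (m n i : ℤ) (hi : i = 0 ∨ i = 1) :
    let t : ℕ := if h : 0 < l then mu ⟨0, h⟩ else 0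
    let mu' : Fin t → ℕ := fun c => (Finset.univ.filter fun k : Fin l => c.1 + 1 ≤ mu k).card
    let T : ℕ → (Fin (t+1) → ℤ) :=
      fun j => Fin.cons (2*m - n - 1 + i - (j : ℤ)) fun c => (mu' c : ℤ)
    let K : ℕ → ℕ := fun j => (∑ c, piT (T j) c).toNat + j + 1
    Xm i n (Finsupp.single m (schurF fun k => (mu k : ℤ)))
      = Finsupp.single (m-1)
          (((-1 : Fq)) ^ (n + 1 + i) •
            ∑ᶠ j : ℕ,
              qq ^ (2*(j : ℤ)) •
                ((sgnT (T j) : Fq) •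
                  ∑ᶠ (lam : Fin (K j) → ℕ)
                    (_ : Antitone lam ∧ IsPartitionT (piT (T j)) ∧
                      (∀ t' : ℕ, conjT (piT (T j)) t' ≤ padZ (fun a => (lam a : ℤ)) t') ∧
                      ((∑ a, (lam a : ℤ)) = (∑ c, piT (T j) c) + j) ∧
                      (∀ t' : ℕ, padZ (fun a => (lam a : ℤ)) t' ≤ conjT (piT (T j)) t' + 1)),
                    schurF fun a => (lam a : ℤ))) := by
  intro t mu' T K
  have hT : schurF (fun k => (mu k : ℤ)) = schurEF (fun c => (mu' c : ℤ)) := by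
    refine schurF_eq_schurEF mu mu' hmu (fun a b hab => conjN_antitone mu hab) (fun k => ?_)
      (fun c => conjN_le mu _) (fun k c => (lt_conjN_iff mu hmu c.1 k).symm)
    have hl : 0 < l := k.pos
    simp only [t, dif_pos hl]
    exact hmu (Fin.mk_le_of_le_val (Nat.zero_le _))
  set P : LamF := schurF (fun k => (mu k : ℤ)) with hP
  set C : ℤ := 2*m - n - 1 + i with hC
  have hXm : Xm i n (Finsupp.single m P) = Finsupp.single (m-1)
      (∑ j ∈ Finset.range (wboundF P + 1), HZm (C + j) * (Phi P).coeff j) := by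
    rw [Xm, Finsupp.sum_single_index]
    · congr 1
      refine Finset.sum_congr rfl fun j _ => ?_
      rw [DopF_hhF]
      congr 2
      rw [hC]
      ring
    · rw [Finset.sum_eq_zero, Finsupp.single_zero]
      intro j _
      rw [DopF_hhF, map_zero, Polynomial.coeff_zero, mul_zero]
  rw [hXm]
  congr 1
  -- beyond `M` the first row of the determinant `s_{(b_j, μ')'}` vanishes
  obtain ⟨M, hM1, hM2⟩ : ∃ M : ℕ, C + wboundF P < M ∧ C + t < M :=
    ⟨(C + wboundF P + C + t).toNat + (C + wboundF P).toNat + (C + t).toNat + 1,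
      by omega, by omega⟩
  have hlarge : ∀ j, M ≤ j → schurEF (T j) = 0 := by
    intro j hj
    refine Matrix.det_eq_zero_of_row_eq_zero 0 fun c => ?_
    simp only [Matrix.of_apply, T, Fin.cons_zero, Fin.val_zero]
    refine eZF_neg ?_
    have := c.2
    push_cast
    omega
  have hterm : ∀ j : ℕ, qq ^ (2*(j : ℤ)) • ((sgnT (T j) : Fq) •
      ∑ᶠ (lam : Fin (K j) → ℕ)
        (_ : Antitone lam ∧ IsPartitionT (piT (T j)) ∧
          (∀ t' : ℕ, conjT (piT (T j)) t' ≤ padZ (fun a => (lam a : ℤ)) t') ∧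
          ((∑ a, (lam a : ℤ)) = (∑ c, piT (T j) c) + j) ∧
          (∀ t' : ℕ, padZ (fun a => (lam a : ℤ)) t' ≤ conjT (piT (T j)) t' + 1)),
        schurF fun a => (lam a : ℤ)) = qq ^ (2*j) • (eeF j * schurEF (T j)) := by
    intro j
    rw [← sgnT_smul_strips (T j) j, ← zpow_natCast qq (2*j), Nat.cast_mul, Nat.cast_ofNat]
  rw [finsum_congr hterm, finsum_eq_sum_of_support_subset (s := Finset.range M)]
  swap
  · intro j hj
    rw [Finset.coe_range, Set.mem_Iio]
    by_contra h
    exact hj (by simp only [hlarge j (not_lt.1 h), mul_zero, smul_zero])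
  have hbern : ∀ b : ℕ, schurEF (T b) = ∑ j ∈ Finset.range (wboundF P + 1),
      (-1 : Fq)^j • (eZF (C - b + j) * (Phi P).coeff j) := by
    intro b
    rw [hT, bernstein_schurEF _ _ _ (Nat.lt_succ_of_le (hT ▸ natDegree_Phi_le P))]
  have hsign : (-1 : Fq) ^ (n + 1 + i) = (-1 : Fq) ^ C := by
    have h1 : C = (n + 1 + i) + 2 * (m - n - 1) := by rw [hC]; ring
    have h2 : (-1 : Fq) ^ (2 * (m - n - 1)) = 1 := by
      rw [zpow_mul]
      norm_num
    rw [h1, zpow_add₀ (by norm_num) (n + 1 + i), h2, mul_one]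
  rw [hsign]
  have hH : ∀ j ∈ Finset.range (wboundF P + 1), HZm (C + j) * (Phi P).coeff j =
      ∑ b ∈ Finset.range M, (-1 : Fq) ^ C • (qq ^ (2*b) • (eeF b *
        ((-1 : Fq)^j • (eZF (C - b + j) * (Phi P).coeff j)))) := by
    intro j hj
    rw [Finset.mem_range] at hj
    rw [HZm_eq (C + j) M (by omega), zpow_add₀ (by norm_num), zpow_natCast, smul_mul_assoc,
      Finset.sum_mul, Finset.smul_sum]
    refine Finset.sum_congr rfl fun b _ => ?_
    rw [show C + (j : ℤ) - b = C - b + j by ring]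
    simp only [smul_mul_assoc, mul_smul_comm, smul_smul, mul_assoc]
    congr 1
    ring
  rw [Finset.sum_congr rfl hH, Finset.sum_comm, Finset.smul_sum]
  refine Finset.sum_congr rfl fun b _ => ?_
  rw [hbern b, Finset.mul_sum, Finset.smul_sum, Finset.smul_sum]
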